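/- Let f : ℝⁿ → ℝ be a function with continuous first derivatives and bounded level sets, M_k n×n real matrices with M_k M_kᵀ nonsingular, α_k > 0, and iterates x_{k+1} = x_k − α_k (M_k M_kᵀ)^{−1} ∇f(x_k) satisfying the first Wolfe condition. If no subsequence of (x_k) converges to a point x_∞ with ∇f(x_∞) = 0, then either some subsequence of (α_k) converges to 0 or the sequence of matrices (M_k) is unbounded (sup_k ‖M_k‖ = ∞). -/

import Mathlib

/-! With `g = ∇f (x k)` and `p = (M Mᵀ)⁻¹ g` one has `g = M (Mᵀ p)` and `⟪g, p⟫ = ‖Mᵀ p‖²`, so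
`‖g‖² ≤ ‖M‖² ⟪g, p⟫` (`dotProduct_self_le_of_gram_inv`). If the `M k` are bounded and the step sizes
stay away from `0`, the Wolfe condition therefore bounds `‖∇f (x k)‖²` by a constant times the
decrease `f (x k) - f (x (k+1))`. The values `f (x k)` are nonincreasing and bounded below, because
the iterates stay in a compact level set; hence the decreases, and with them the gradients, tend
to `0`. Every limit point of the bounded sequence of iterates is then critical, a contradiction. -/

open Filter Matrix
open scoped RealInnerProductSpace

/-- A lower bound for the quadratic form of `(M Mᵀ)⁻¹` in terms of a bound on the entries of `M`. -/
lemma dotProduct_self_le_of_gram_inv {n : ℕ} (M : Matrix (Fin n) (Fin n) ℝ)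
    (hM : IsUnit (M * Mᵀ)) (C : ℝ) (hC : ∀ i j, |M i j| ≤ C) (g : Fin n → ℝ) :
    g ⬝ᵥ g ≤ ((n : ℝ) * (n * C ^ 2)) * (g ⬝ᵥ ((M * Mᵀ)⁻¹ *ᵥ g)) := by
  set q := (M * Mᵀ)⁻¹ *ᵥ g with hq
  set w := Mᵀ *ᵥ q with hw
  have hg : g = M *ᵥ w := by
    rw [hw, hq, mulVec_mulVec, mulVec_mulVec,
      Matrix.mul_nonsing_inv _ ((Matrix.isUnit_iff_isUnit_det _).1 hM), one_mulVec]
  have hgq : g ⬝ᵥ q = w ⬝ᵥ w := by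
    conv_rhs => rw [hw, dotProduct_mulVec, vecMul_transpose, ← hw, ← hg]
  rw [hgq]
  have key : ∀ i, g i * g i ≤ (n * C ^ 2) * (w ⬝ᵥ w) := by
    intro i
    have h1 : g i = ∑ j, M i j * w j := by
      conv_lhs => rw [hg]
      rfl
    have h2 := Finset.sum_mul_sq_le_sq_mul_sq Finset.univ (fun j => M i j) w
    have h3 : ∑ j, M i j ^ 2 ≤ n * C ^ 2 := by
      calc ∑ j, M i j ^ 2 ≤ ∑ _j : Fin n, C ^ 2 :=
            Finset.sum_le_sum fun j _ => sq_le_sq' (abs_le.1 (hC i j)).1 (abs_le.1 (hC i j)).2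
        _ = n * C ^ 2 := by simp
    have h4 : w ⬝ᵥ w = ∑ j, w j ^ 2 := by simp [dotProduct, sq]
    rw [h4, ← sq, h1]
    exact h2.trans (mul_le_mul_of_nonneg_right h3 (Finset.sum_nonneg fun j _ => sq_nonneg _))
  calc g ⬝ᵥ g = ∑ i, g i * g i := rfl
    _ ≤ ∑ _i : Fin n, (n * C ^ 2) * (w ⬝ᵥ w) := Finset.sum_le_sum fun i _ => key i
    _ = _ := by simp; ring

/-- For iterates `x (k+1) = x k - α k • (M k * (M k)ᵀ)⁻¹ ∇f (x k)` of a `C¹`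
function with bounded level sets satisfying the first Wolfe condition: if no subsequence of the
iterates converges to a critical point, then either some subsequence of the step sizes
converges to `0` or the sequence of matrices `M k` is unbounded. -/
theorem bfgs_divergence_stmt1 (n : ℕ) (f : EuclideanSpace ℝ (Fin n) → ℝ)
    (hf : ContDiff ℝ 1 f)
    (hlev : ∀ a : ℝ, Bornology.IsBounded {x : EuclideanSpace ℝ (Fin n) | f x ≤ a})
    (M : ℕ → Matrix (Fin n) (Fin n) ℝ) (α : ℕ → ℝ) (hα : ∀ k, 0 < α k)
    (hinv : ∀ k, IsUnit (M k * (M k)ᵀ))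
    (x : ℕ → EuclideanSpace ℝ (Fin n))
    (hiter : ∀ k, x (k + 1) =
      x k - α k • (Matrix.toEuclideanLin ((M k * (M k)ᵀ)⁻¹) (gradient f (x k))))
    (hwolfe : ∃ σ : ℝ, σ ∈ Set.Ioo (0 : ℝ) 1 ∧ ∀ k,
      f (x (k + 1)) ≤ f (x k) + σ * ⟪gradient f (x k), x (k + 1) - x k⟫)
    (hnosub : ¬ ∃ (xinf : EuclideanSpace ℝ (Fin n)) (φ : ℕ → ℕ), StrictMono φ ∧
      Tendsto (fun k => x (φ k)) atTop (nhds xinf) ∧ gradient f xinf = 0) :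
    (∃ φ : ℕ → ℕ, StrictMono φ ∧ Tendsto (fun k => α (φ k)) atTop (nhds 0)) ∨
      ¬ ∃ C : ℝ, ∀ k i j, |M k i j| ≤ C := by
  obtain ⟨σ, ⟨hσ, -⟩, hW⟩ := hwolfe
  by_contra! hcon
  obtain ⟨hα0, C, hC⟩ := hcon
  -- Step sizes without a subsequence tending to `0` are eventually bounded away from `0`.
  obtain ⟨ε, hε, hαε⟩ : ∃ ε : ℝ, 0 < ε ∧ ∀ᶠ k in atTop, ε ≤ α k := by
    by_contra! h
    obtain ⟨φ, hφ, hφl⟩ := Filter.extraction_forall_of_frequently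
      (P := fun m k => α k < 1 / ((m : ℝ) + 1)) fun m => by
        simpa [Filter.Frequently] using h (1 / ((m : ℝ) + 1)) (by positivity)
    exact hα0 φ hφ (squeeze_zero (fun k => (hα _).le) (fun k => (hφl k).le)
      tendsto_one_div_add_atTop_nhds_zero_nat)
  -- Adding `1` keeps the constant positive when `n = 0` or `C = 0`.
  set K : ℝ := (n : ℝ) * (n * C ^ 2) + 1 with hK
  have hKpos : 0 < K := by positivity
  set p : ℕ → EuclideanSpace ℝ (Fin n) := fun k =>
    Matrix.toEuclideanLin ((M k * (M k)ᵀ)⁻¹) (gradient f (x k)) with hp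
  have hgp0 : ∀ k, 0 ≤ ⟪gradient f (x k), p k⟫ ∧
      ‖gradient f (x k)‖ ^ 2 ≤ K * ⟪gradient f (x k), p k⟫ := by
    intro k
    have h1 := dotProduct_self_le_of_gram_inv (M k) (hinv k) C (hC k) (gradient f (x k)).ofLp
    have h2 : ⟪gradient f (x k), p k⟫ = (gradient f (x k)).ofLp ⬝ᵥ
        ((M k * (M k)ᵀ)⁻¹ *ᵥ (gradient f (x k)).ofLp) := by
      rw [EuclideanSpace.inner_eq_star_dotProduct, dotProduct_comm]
      simp [hp]
    have h3 : ‖gradient f (x k)‖ ^ 2 = (gradient f (x k)).ofLp ⬝ᵥ (gradient f (x k)).ofLp := by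
      rw [EuclideanSpace.norm_sq_eq]
      simp [dotProduct, sq]
    have h0 : 0 ≤ ⟪gradient f (x k), p k⟫ := by
      rw [h2]
      have := ((Matrix.posSemidef_self_mul_conjTranspose (M k)).inv).dotProduct_mulVec_nonneg
        (gradient f (x k)).ofLp
      simpa [conjTranspose_eq_transpose_of_trivial] using this
    refine ⟨h0, ?_⟩
    rw [← h2, ← h3] at h1
    rw [hK]
    linarith
  have hdec : ∀ k, σ * (α k * ⟪gradient f (x k), p k⟫) ≤ f (x k) - f (x (k + 1)) := by
    intro k
    have h := hW k
    have h2 : x (k + 1) - x k = -(α k • p k) := by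
      rw [hiter k]
      simp [hp]
    rw [h2, inner_neg_right, real_inner_smul_right] at h
    linarith
  have hanti : Antitone fun k => f (x k) := antitone_nat_of_succ_le fun k => by
    have h := hdec k
    have := mul_nonneg hσ.le (mul_nonneg (hα k).le (hgp0 k).1)
    linarith
  have hcompact : IsCompact {y | f y ≤ f (x 0)} := Metric.isCompact_of_isClosed_isBounded
    (isClosed_le hf.continuous continuous_const) (hlev _)
  have hmem : ∀ k, x k ∈ {y | f y ≤ f (x 0)} := fun k => hanti (Nat.zero_le k)
  have hbdd : BddBelow (Set.range fun k => f (x k)) :=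
    (hcompact.bddBelow_image hf.continuous.continuousOn).mono (by
      rintro _ ⟨k, rfl⟩
      exact ⟨x k, hmem k, rfl⟩)
  have hlim := tendsto_atTop_ciInf hanti hbdd
  have hdiff : Tendsto (fun k => K / (σ * ε) * (f (x k) - f (x (k + 1)))) atTop (nhds 0) := by
    simpa using (hlim.sub (hlim.comp (tendsto_add_atTop_nat 1))).const_mul (K / (σ * ε))
  have hsq : Tendsto (fun k => ‖gradient f (x k)‖ ^ 2) atTop (nhds 0) := by
    refine squeeze_zero' (Eventually.of_forall fun k => sq_nonneg _) ?_ hdiff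
    filter_upwards [hαε] with k hk
    obtain ⟨h0, h1⟩ := hgp0 k
    have h2 : σ * ε * ⟪gradient f (x k), p k⟫ ≤ f (x k) - f (x (k + 1)) := by
      refine le_trans ?_ (hdec k)
      rw [mul_assoc]
      gcongr
    refine h1.trans ?_
    rw [div_mul_eq_mul_div, le_div_iff₀ (by positivity)]
    calc K * ⟪gradient f (x k), p k⟫ * (σ * ε) = K * (σ * ε * ⟪gradient f (x k), p k⟫) := by ring
      _ ≤ _ := by gcongr
  obtain ⟨y, -, φ, hφ, hφy⟩ := hcompact.tendsto_subseq hmem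
  have hgc : Continuous (gradient f) :=
    (InnerProductSpace.toDual ℝ (EuclideanSpace ℝ (Fin n))).symm.continuous.comp
      (hf.continuous_fderiv one_ne_zero)
  refine hnosub ⟨y, φ, hφ, hφy, ?_⟩
  have h1 : Tendsto (fun k => ‖gradient f (x (φ k))‖ ^ 2) atTop (nhds (‖gradient f y‖ ^ 2)) :=
    (((hgc.norm.pow 2).tendsto y).comp hφy)
  have h2 := tendsto_nhds_unique h1 (hsq.comp hφ.tendsto_atTop)
  simpa using h2
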